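/- Let ρ, C₁ be positive real numbers, let a ∈ [0,1), b ≥ 0, and let κ₁, κ₂ be real numbers satisfying ρ³(κ₁ + κ₂) > 2C₁ and ρ³·κ₁κ₂ > C₁·(κ₁ + κ₂). Define K₁ = κ₁/(1−a) + b and K₂ = κ₂/(1−a) + b. Then ρ³·K₁K₂ > C₁·(K₁ + K₂). -/

import Mathlib

/-!
Writing `R = ρ³`, the inequality `C (x + y) < R x y` says `C² < (R x - C) (R y - C)`, and
`2 C < R (x + y)` selects the branch on which both factors are positive. On that branch the
inequality persists when `x` and `y` increase. Positive curvatures do increase under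
`κ ↦ κ / (1 - a) + b`.
-/

theorem pos_and_pos_of_mul_pos_of_add_pos {𝕜 : Type*} [Semiring 𝕜] [LinearOrder 𝕜]
    [IsOrderedRing 𝕜] {x y : 𝕜} (hmul : 0 < x * y) (hadd : 0 < x + y) : 0 < x ∧ 0 < y :=
  (pos_and_pos_or_neg_and_neg_of_mul_pos hmul).resolve_right
    fun ⟨hx, hy⟩ ↦ (add_nonpos hx.le hy.le).not_gt hadd

section OrderedRing

variable {𝕜 : Type*} [CommRing 𝕜] [LinearOrder 𝕜] [IsStrictOrderedRing 𝕜] {R C x y x' y' : 𝕜}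

theorem mul_add_lt_mul_mul_iff_sq_lt (hR : 0 < R) :
    C * (x + y) < R * (x * y) ↔ C ^ 2 < (R * x - C) * (R * y - C) := by
  have factorization :
      (R * x - C) * (R * y - C) - C ^ 2 = R * (R * (x * y) - C * (x + y)) := by ring
  rw [← sub_pos, ← sub_pos (b := C ^ 2), factorization, mul_pos_iff_of_pos_left hR]

theorem lt_mul_and_lt_mul_of_mul_add_lt_mul_mul (hR : 0 < R) (hsum : 2 * C < R * (x + y))
    (hprod : C * (x + y) < R * (x * y)) : C < R * x ∧ C < R * y := by
  have hmul : 0 < (R * x - C) * (R * y - C) :=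
    (sq_nonneg C).trans_lt ((mul_add_lt_mul_mul_iff_sq_lt hR).1 hprod)
  have hadd : 0 < (R * x - C) + (R * y - C) := by linarith
  simpa only [sub_pos] using pos_and_pos_of_mul_pos_of_add_pos hmul hadd

theorem mul_add_lt_mul_mul_of_le_of_le (hR : 0 < R) (hsum : 2 * C < R * (x + y))
    (hprod : C * (x + y) < R * (x * y)) (hx : x ≤ x') (hy : y ≤ y') :
    C * (x' + y') < R * (x' * y') := by
  obtain ⟨hCx, hCy⟩ := lt_mul_and_lt_mul_of_mul_add_lt_mul_mul hR hsum hprod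
  have hx_sub : R * x - C ≤ R * x' - C := by gcongr
  have hy_sub : R * y - C ≤ R * y' - C := by gcongr
  rw [mul_add_lt_mul_mul_iff_sq_lt hR] at hprod ⊢
  calc
    C ^ 2 < (R * x - C) * (R * y - C) := hprod
    _ ≤ (R * x' - C) * (R * y' - C) :=
      mul_le_mul hx_sub hy_sub (sub_pos.2 hCy).le ((sub_pos.2 hCx).le.trans hx_sub)

end OrderedRing

section OrderedField

variable {𝕜 : Type*} [Field 𝕜] [LinearOrder 𝕜] [IsStrictOrderedRing 𝕜] {R C a b x κ₁ κ₂ : 𝕜}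

theorem le_div_one_sub_add (ha : a ∈ Set.Ico (0 : 𝕜) 1) (hb : 0 ≤ b) (hx : 0 ≤ x) :
    x ≤ x / (1 - a) + b :=
  le_add_of_le_of_nonneg
    (le_div_self hx (sub_pos.2 ha.2) (sub_le_self 1 ha.1)) hb

theorem stmt_1_general (hR : 0 < R) (hC : 0 ≤ C) (ha : a ∈ Set.Ico (0 : 𝕜) 1) (hb : 0 ≤ b)
    (hsum : 2 * C < R * (κ₁ + κ₂)) (hprod : C * (κ₁ + κ₂) < R * (κ₁ * κ₂)) :
    C * ((κ₁ / (1 - a) + b) + (κ₂ / (1 - a) + b))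
      < R * ((κ₁ / (1 - a) + b) * (κ₂ / (1 - a) + b)) := by
  obtain ⟨hCκ₁, hCκ₂⟩ := lt_mul_and_lt_mul_of_mul_add_lt_mul_mul hR hsum hprod
  have hκ₁ : 0 < κ₁ := pos_of_mul_pos_right (hC.trans_lt hCκ₁) hR.le
  have hκ₂ : 0 < κ₂ := pos_of_mul_pos_right (hC.trans_lt hCκ₂) hR.le
  exact mul_add_lt_mul_mul_of_le_of_le hR hsum hprod
    (le_div_one_sub_add ha hb hκ₁.le) (le_div_one_sub_add ha hb hκ₂.le)

end OrderedField

/-- Algebraic core of the conformal transformation of the convexity condition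
`ρ³·det(A₀) > C₁·Hₒ`: with `K₁ = κ₁/(1−a) + b`, `K₂ = κ₂/(1−a) + b`. -/
theorem stmt_1 (ρ C₁ a b κ₁ κ₂ : ℝ) (hρ : 0 < ρ) (hC₁ : 0 < C₁)
    (ha : a ∈ Set.Ico (0 : ℝ) 1) (hb : 0 ≤ b)
    (hH : ρ ^ 3 * (κ₁ + κ₂) > 2 * C₁)
    (hdet : ρ ^ 3 * (κ₁ * κ₂) > C₁ * (κ₁ + κ₂)) :
    ρ ^ 3 * ((κ₁ / (1 - a) + b) * (κ₂ / (1 - a) + b))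
      > C₁ * ((κ₁ / (1 - a) + b) + (κ₂ / (1 - a) + b)) :=
  stmt_1_general (pow_pos hρ 3) hC₁.le ha hb hH hdet
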